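/- arXiv:2304.12295 — 2 statements merged into one kernel-verified Lean document; each statement's English description precedes it below -/
import Mathlib

section
/- The resultant with respect to c of the polynomials g₁ = 2c⁶ + (−16s₂² + 4s₄)c⁵ + 20c⁴s₂ − 10c³ − 10c²s₄ + (16s₂²s₄ − 4s₄² + 4s₂)c − 4s₂s₄ − 1 and g₂ = 2c⁴ − 8s₂c² + 4c + 2s₄ equals h³ up to a nonzero constant factor, where h = 256s₂⁴s₄ − 128s₂²s₄² + 64s₂³ + 16s₄³ − 144s₂s₄ − 27. In particular, if h ≠ 0 then g₁ and g₂ have no common root in c over ℂ. -/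
open Polynomial

/-- The Sylvester matrix of `f` (in degree `m`) and `g` (in degree `n`): its determinant
is the resultant `Res(f, g)`. Rows `0,…,n−1` are shifts of the coefficients of `f`,
rows `n,…,n+m−1` are shifts of the coefficients of `g`. -/
noncomputable def sylvester (m n : ℕ) (f g : Polynomial ℂ) :
    Matrix (Fin (m + n)) (Fin (m + n)) ℂ := fun i j =>
  if (i : ℕ) < n then
    (if (i : ℕ) ≤ (j : ℕ) ∧ (j : ℕ) ≤ m + (i : ℕ) then f.coeff (m + (i : ℕ) - (j : ℕ)) else 0)
  else
    (if (i : ℕ) - n ≤ (j : ℕ) ∧ (j : ℕ) ≤ n + ((i : ℕ) - n) then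
      g.coeff (n + ((i : ℕ) - n) - (j : ℕ)) else 0)

/-- `g₁ = 2c⁶ + (−16s₂²+4s₄)c⁵ + 20s₂c⁴ − 10c³ − 10s₄c² + (16s₂²s₄ − 4s₄² + 4s₂)c − 4s₂s₄ − 1`. -/
noncomputable def G₁ (s₂ s₄ : ℂ) : Polynomial ℂ :=
  C 2 * X ^ 6 + C (-16 * s₂ ^ 2 + 4 * s₄) * X ^ 5 + C (20 * s₂) * X ^ 4
    - C 10 * X ^ 3 - C (10 * s₄) * X ^ 2 + C (16 * s₂ ^ 2 * s₄ - 4 * s₄ ^ 2 + 4 * s₂) * X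
    + C (-4 * s₂ * s₄ - 1)

/-- `g₂ = 2c⁴ − 8s₂c² + 4c + 2s₄`. -/
noncomputable def G₂ (s₂ s₄ : ℂ) : Polynomial ℂ :=
  C 2 * X ^ 4 - C (8 * s₂) * X ^ 2 + C 4 * X + C (2 * s₄)

/-- `h = 256s₂⁴s₄ − 128s₂²s₄² + 64s₂³ + 16s₄³ − 144s₂s₄ − 27`. -/
def hDisc (s₂ s₄ : ℂ) : ℂ :=
  256 * s₂ ^ 4 * s₄ - 128 * s₂ ^ 2 * s₄ ^ 2 + 64 * s₂ ^ 3 + 16 * s₄ ^ 3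
    - 144 * s₂ * s₄ - 27

/-!
Let `D = -g₂'/4 = -2c³ + 4s₂c - 1`. Then `g₁ ≡ D³` modulo `g₂`, so up to a power of the leading
coefficient of `g₂` the resultant of `g₁` and `g₂` is the cube of `Res(D, g₂)`, a constant multiple
of the discriminant of `g₂`. There one Euclidean step replaces `g₂` by the quadratic
`g₂ + c D = -4s₂c² + 3c + 2s₄`, and the remaining `5 × 5` determinant is `2h`.
-/

section CommRing

variable {R : Type*} [CommRing R]

theorem resultant_pow_add_mul_left (f g p : R[X]) (k n : ℕ) (hf : f.leadingCoeff ^ k ≠ 0)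
    (hg : g.natDegree ≤ n) (hp : p.natDegree + n ≤ k * f.natDegree) :
    resultant (f ^ k + g * p) g (k * f.natDegree) n = resultant f g f.natDegree n ^ k := by
  rw [resultant_add_mul_left _ _ _ _ _ hp hg, ← natDegree_pow' hf,
    resultant_pow_left _ _ _ _ hf hg]

theorem resultant_eq_zero_of_isRoot {f g : R[X]} {m n : ℕ} {x : R} (hf : f.natDegree ≤ m)
    (hg : g.natDegree ≤ n) (hmn : m ≠ 0 ∨ n ≠ 0) (hfx : f.IsRoot x) (hgx : g.IsRoot x) :
    resultant f g m n = 0 := by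
  obtain ⟨p, q, -, -, hpq⟩ := exists_mul_add_mul_eq_C_resultant f g hf hg hmn
  simpa [hfx.eq_zero, hgx.eq_zero] using (congrArg (eval x) hpq).symm

theorem sylvester_depressed_cubic_quadratic (a b c d e f : R) :
    Polynomial.sylvester (C a * X ^ 3 + C b * X + C c) (C d * X ^ 2 + C e * X + C f) 3 2 =
      !![f, 0, 0, c, 0;
         e, f, 0, b, c;
         d, e, f, 0, b;
         0, d, e, a, 0;
         0, 0, d, 0, a] := by
  ext i j
  fin_cases i <;> fin_cases j <;>
    simp [Polynomial.sylvester, Fin.addCases, coeff_X, coeff_C]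

theorem resultant_depressed_cubic_quadratic (a b c d e f : R) :
    resultant (C a * X ^ 3 + C b * X + C c) (C d * X ^ 2 + C e * X + C f) 3 2 =
      a ^ 2 * f ^ 3 + a * b * f * (e ^ 2 - 2 * d * f) + a * c * (3 * d * e * f - e ^ 3)
        + b ^ 2 * d ^ 2 * f - b * c * d ^ 2 * e + c ^ 2 * d ^ 3 := by
  rw [resultant, sylvester_depressed_cubic_quadratic]
  simp [Matrix.det_succ_row_zero, Fin.sum_univ_succ, Fin.succAbove]
  ring

end CommRing

-- Mathlib lists the coefficients by ascending degree and down the columns, `g` first.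
theorem polynomial_sylvester_eq_submatrix_rev (m n : ℕ) (f g : ℂ[X]) :
    Polynomial.sylvester f g m n =
      (_root_.sylvester m n f g).transpose.submatrix Fin.revPerm Fin.revPerm := by
  ext i j
  have hi := i.isLt
  induction j using Fin.addCases with
  | left j =>
    have hj := j.isLt
    have hrow : ¬ m + n - (j + 1) < n := by lia
    simp only [Polynomial.sylvester, _root_.sylvester, Matrix.of_apply, Fin.addCases_left,
      Matrix.submatrix_apply, Matrix.transpose_apply, Fin.revPerm_apply, Fin.val_rev,
      Fin.val_castAdd, Set.mem_Icc, if_neg hrow]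
    refine if_congr (by lia) (congrArg g.coeff ?_) rfl
    lia
  | right j =>
    have hj := j.isLt
    have hrow : m + n - (m + j + 1) < n := by lia
    simp only [Polynomial.sylvester, _root_.sylvester, Matrix.of_apply, Fin.addCases_right,
      Matrix.submatrix_apply, Matrix.transpose_apply, Fin.revPerm_apply, Fin.val_rev,
      Fin.val_natAdd, Set.mem_Icc, if_pos hrow]
    refine if_congr (by lia) (congrArg f.coeff ?_) rfl
    lia

theorem det_sylvester (m n : ℕ) (f g : ℂ[X]) :
    (_root_.sylvester m n f g).det = f.resultant g m n := by
  rw [resultant, polynomial_sylvester_eq_submatrix_rev, Matrix.det_submatrix_equiv_self,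
    Matrix.det_transpose]

theorem natDegree_G₁_le (s₂ s₄ : ℂ) : (G₁ s₂ s₄).natDegree ≤ 6 := by
  unfold G₁
  compute_degree

theorem natDegree_G₂_le (s₂ s₄ : ℂ) : (G₂ s₂ s₄).natDegree ≤ 4 := by
  unfold G₂
  compute_degree

theorem coeff_four_G₂ (s₂ s₄ : ℂ) : (G₂ s₂ s₄).coeff 4 = 2 := by
  unfold G₂
  compute_degree!

/-- The cubic `D = -g₂'/4`, whose cube represents `g₁` modulo `g₂`. -/
noncomputable def negQuarterDerivG₂ (s₂ : ℂ) : ℂ[X] :=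
  C (-2) * X ^ 3 + C (4 * s₂) * X + C (-1)

theorem natDegree_negQuarterDerivG₂ (s₂ : ℂ) : (negQuarterDerivG₂ s₂).natDegree = 3 := by
  unfold negQuarterDerivG₂
  compute_degree!

theorem coeff_three_negQuarterDerivG₂ (s₂ : ℂ) : (negQuarterDerivG₂ s₂).coeff 3 = -2 := by
  unfold negQuarterDerivG₂
  compute_degree!

theorem leadingCoeff_negQuarterDerivG₂ (s₂ : ℂ) : (negQuarterDerivG₂ s₂).leadingCoeff = -2 := by
  rw [leadingCoeff, natDegree_negQuarterDerivG₂, coeff_three_negQuarterDerivG₂]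

/-- The quotient `(g₁ - D³) / g₂`, where `D` is `negQuarterDerivG₂ s₂`. -/
noncomputable def cofactorG₂ (s₂ s₄ : ℂ) : ℂ[X] :=
  C 4 * X ^ 5 - C (8 * s₂) * X ^ 3 - X ^ 2 + C (8 * s₂ ^ 2 - 2 * s₄) * X - C (2 * s₂)

theorem natDegree_cofactorG₂_le (s₂ s₄ : ℂ) : (cofactorG₂ s₂ s₄).natDegree ≤ 5 := by
  unfold cofactorG₂
  compute_degree

theorem G₁_eq_pow_add_mul (s₂ s₄ : ℂ) :
    G₁ s₂ s₄ = negQuarterDerivG₂ s₂ ^ 3 + G₂ s₂ s₄ * cofactorG₂ s₂ s₄ := by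
  simp only [G₁, G₂, negQuarterDerivG₂, cofactorG₂, map_add, map_sub, map_mul, map_pow, map_neg,
    map_ofNat, map_one]
  ring

theorem G₂_eq_quadratic_add_mul (s₂ s₄ : ℂ) :
    G₂ s₂ s₄ = C (-4 * s₂) * X ^ 2 + C 3 * X + C (2 * s₄) + negQuarterDerivG₂ s₂ * -X := by
  simp only [G₂, negQuarterDerivG₂, map_mul, map_neg, map_ofNat, map_one]
  ring

theorem resultant_negQuarterDerivG₂_G₂ (s₂ s₄ : ℂ) :
    resultant (negQuarterDerivG₂ s₂) (G₂ s₂ s₄) 3 4 = 8 * hDisc s₂ s₄ := by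
  have hD : (negQuarterDerivG₂ s₂).natDegree ≤ 3 := (natDegree_negQuarterDerivG₂ s₂).le
  rw [G₂_eq_quadratic_add_mul, resultant_add_mul_right _ _ _ _ _ (by simp) hD,
    resultant_add_right_deg _ _ _ 2 2 (by compute_degree), coeff_three_negQuarterDerivG₂,
    negQuarterDerivG₂, resultant_depressed_cubic_quadratic, hDisc]
  ring

theorem resultant_G₁_G₂ (s₂ s₄ : ℂ) :
    resultant (G₁ s₂ s₄) (G₂ s₂ s₄) 6 4 = 64 * hDisc s₂ s₄ ^ 3 := by
  have hcube : resultant (G₁ s₂ s₄) (G₂ s₂ s₄) 9 4 = (8 * hDisc s₂ s₄) ^ 3 := by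
    have hD := natDegree_negQuarterDerivG₂ s₂
    have hlead : (negQuarterDerivG₂ s₂).leadingCoeff ^ 3 ≠ 0 := by
      simp [leadingCoeff_negQuarterDerivG₂]
    have hcofactor : (cofactorG₂ s₂ s₄).natDegree + 4 ≤ 3 * (negQuarterDerivG₂ s₂).natDegree := by
      have := natDegree_cofactorG₂_le s₂ s₄
      lia
    have hpow := resultant_pow_add_mul_left _ _ _ 3 4 hlead (natDegree_G₂_le s₂ s₄) hcofactor
    rwa [← G₁_eq_pow_add_mul, hD, resultant_negQuarterDerivG₂_G₂] at hpow
  have hdrop : resultant (G₁ s₂ s₄) (G₂ s₂ s₄) 9 4 =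
      2 ^ 3 * resultant (G₁ s₂ s₄) (G₂ s₂ s₄) 6 4 := by
    rw [resultant_add_left_deg _ _ 6 4 3 (natDegree_G₁_le s₂ s₄), coeff_four_G₂]
    norm_num
  linear_combination (hcube - hdrop) / 8

/-- The resultant with respect to `c` of `g₁` and `g₂` equals `h³` up to a nonzero
constant factor. In particular, if `h ≠ 0` then `g₁` and `g₂` have no common complex root. -/
theorem resultant_eq_h_cubed :
    (∃ k : ℂ, k ≠ 0 ∧ ∀ s₂ s₄ : ℂ,
        (sylvester 6 4 (G₁ s₂ s₄) (G₂ s₂ s₄)).det = k * hDisc s₂ s₄ ^ 3) ∧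
    (∀ s₂ s₄ : ℂ, hDisc s₂ s₄ ≠ 0 →
        ∀ c : ℂ, ¬((G₁ s₂ s₄).eval c = 0 ∧ (G₂ s₂ s₄).eval c = 0)) := by
  refine ⟨⟨64, by norm_num, fun s₂ s₄ => ?_⟩, ?_⟩
  · rw [det_sylvester, resultant_G₁_G₂]
  · rintro s₂ s₄ hh c ⟨h₁, h₂⟩
    have hres := resultant_eq_zero_of_isRoot (natDegree_G₁_le s₂ s₄) (natDegree_G₂_le s₂ s₄)
      (by norm_num) h₁ h₂
    rw [resultant_G₁_G₂] at hres
    exact mul_ne_zero (by norm_num) (pow_ne_zero 3 hh) hres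
end

section
/- The resultant with respect to c of the polynomials s₄' = c⁴ − 4c²s₂ + 2c + s₄ and r = s₃' − 2b·s₄' where s₃' = 2bc⁴ − 8bc²s₂ + 2c³ + 4bc + 2bs₄ − 4cs₂ + 1 (so r = 2c³ − 4cs₂ + 1) equals, up to a nonzero constant, h = 256s₂⁴s₄ − 128s₂²s₄² + 64s₂³ + 16s₄³ − 144s₂s₄ − 27. Hence if h = 0 these two polynomials in c have a common complex root. -/
open Polynomial

/-- `s₄' = c⁴ − 4s₂c² + 2c + s₄` as a polynomial in `c`. -/
noncomputable def S₄' (s₂ s₄ : ℂ) : Polynomial ℂ :=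
  X ^ 4 - C (4 * s₂) * X ^ 2 + C 2 * X + C s₄

/-- `r = 2c³ − 4s₂c + 1` as a polynomial in `c`. -/
noncomputable def R (s₂ : ℂ) : Polynomial ℂ :=
  C 2 * X ^ 3 - C (4 * s₂) * X + C 1

theorem exists_isRoot_isRoot_of_resultant_eq_zero {K : Type*} [Field K] [IsAlgClosed K]
    {f g : K[X]} (h : f.resultant g = 0) : ∃ x, f.IsRoot x ∧ g.IsRoot x := by
  have not_coprime : ¬IsCoprime f g := (resultant_eq_zero_iff.mp h).2
  simpa [isCoprime_iff_aeval_ne_zero_of_isAlgClosed K K, IsRoot] using not_coprime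

section CommRing

variable {A : Type*} [CommRing A]

/-- The depressed monic quartic `X⁴ + pX² + qX + r`, of which `s₄'` is an instance. -/
noncomputable def depressedQuartic (p q r : A) : A[X] :=
  X ^ 4 + C p * X ^ 2 + C q * X + C r

theorem derivative_depressedQuartic (p q r : A) :
    derivative (depressedQuartic p q r) = C 4 * X ^ 3 + C (2 * p) * X + C q := by
  simp only [depressedQuartic, derivative_add, derivative_C_mul, derivative_X_pow, derivative_X,
    derivative_C, map_mul, map_ofNat, Nat.cast_ofNat, Nat.add_one_sub_one]
  ring

theorem resultant_depressedQuartic_derivative (p q r : A) :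
    (depressedQuartic p q r).resultant (derivative (depressedQuartic p q r)) 4 3 =
      16 * p ^ 4 * r - 4 * p ^ 3 * q ^ 2 - 128 * p ^ 2 * r ^ 2 + 144 * p * q ^ 2 * r
        - 27 * q ^ 4 + 256 * r ^ 3 := by
  have entries :
      Polynomial.sylvester (depressedQuartic p q r) (derivative (depressedQuartic p q r)) 4 3 =
        !![q, 0, 0, 0, r, 0, 0;
           2 * p, q, 0, 0, q, r, 0;
           0, 2 * p, q, 0, p, q, r;
           4, 0, 2 * p, q, 0, p, q;
           0, 4, 0, 2 * p, 1, 0, p;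
           0, 0, 4, 0, 0, 1, 0;
           0, 0, 0, 4, 0, 0, 1] := by
    rw [derivative_depressedQuartic]
    ext i j
    fin_cases i <;> fin_cases j <;>
      simp [Polynomial.sylvester, Fin.addCases, depressedQuartic, coeff_X, coeff_C, -map_mul]
  rw [resultant, entries]
  eval_det
  ring

end CommRing

theorem S₄'_eq_depressedQuartic (s₂ s₄ : ℂ) : S₄' s₂ s₄ = depressedQuartic (-(4 * s₂)) 2 s₄ := by
  rw [S₄', depressedQuartic, C_neg]
  ring

theorem natDegree_S₄' (s₂ s₄ : ℂ) : (S₄' s₂ s₄).natDegree = 4 := by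
  unfold S₄'
  compute_degree!

theorem natDegree_R (s₂ : ℂ) : (R s₂).natDegree = 3 := by
  unfold R
  compute_degree!

theorem derivative_S₄' (s₂ s₄ : ℂ) : derivative (S₄' s₂ s₄) = C 2 * R s₂ := by
  rw [S₄'_eq_depressedQuartic, derivative_depressedQuartic, R]
  simp only [map_mul, map_neg, map_ofNat, map_one]
  ring

theorem resultant_S₄'_R (s₂ s₄ : ℂ) : (S₄' s₂ s₄).resultant (R s₂) 4 3 = hDisc s₂ s₄ := by
  have discriminant := resultant_depressedQuartic_derivative (-(4 * s₂)) 2 s₄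
  rw [← S₄'_eq_depressedQuartic, derivative_S₄', resultant_C_mul_right] at discriminant
  rw [hDisc]
  linear_combination discriminant / 16

/-- `s₃' − 2b·s₄' = 2c³ − 4s₂c + 1` is independent of `b`, and the resultant with respect
to `c` of `s₄' = c⁴ − 4s₂c² + 2c + s₄` and `2c³ − 4s₂c + 1` equals `h` up to a nonzero
constant; hence if `h = 0` these two polynomials have a common complex root. -/
theorem resultant_eq_h :
    (∀ b c s₂ s₄ : ℂ,
      (2 * b * c ^ 4 - 8 * b * c ^ 2 * s₂ + 2 * c ^ 3 + 4 * b * c + 2 * b * s₄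
          - 4 * c * s₂ + 1) - 2 * b * (c ^ 4 - 4 * c ^ 2 * s₂ + 2 * c + s₄)
        = 2 * c ^ 3 - 4 * c * s₂ + 1) ∧
    (∃ k : ℂ, k ≠ 0 ∧ ∀ s₂ s₄ : ℂ,
        (sylvester 4 3 (S₄' s₂ s₄) (R s₂)).det = k * hDisc s₂ s₄) ∧
    (∀ s₂ s₄ : ℂ, hDisc s₂ s₄ = 0 →
        ∃ c : ℂ, (S₄' s₂ s₄).eval c = 0 ∧ (R s₂).eval c = 0) := by
  refine ⟨fun b c s₂ s₄ => by ring, ⟨1, one_ne_zero, fun s₂ s₄ => ?_⟩, fun s₂ s₄ h => ?_⟩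
  · rw [det_sylvester, resultant_S₄'_R, one_mul]
  · apply exists_isRoot_isRoot_of_resultant_eq_zero
    rw [natDegree_S₄', natDegree_R, resultant_S₄'_R, h]
end
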